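/- arXiv:1311.3631 — 2 statements merged into one kernel-verified Lean document; each statement's English description precedes it below -/
import Mathlib

section
/- Translation correctness for the pattern 'Ψ1 implies Ψ2 during following [a,b]' with an absolute interval: let π be a finite timed trace, Ψ1, Ψ2 state predicates on S, and 0 ≤ a ≤ b. Assume there is an index p with t_p = t_0 + a. Then π ⊨ X_{≤a} G_{≤b−a} (Ψ1 ⟹ Ψ2) if and only if for every index i with t_0 + a ≤ t_i ≤ t_0 + b, Ψ1(s_i) implies Ψ2(s_i). -/
/-- A finite timed trace: states `s 0, …, s n` with strictly increasing
time stamps `t 0 < t 1 < ⋯ < t n`. -/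
structure TTrace (S : Type*) where
  n : ℕ
  s : ℕ → S
  t : ℕ → ℝ
  mono : ∀ i, i < n → t i < t (i + 1)

/-- The suffix `π^i` of a timed trace. -/
def TTrace.suffix {S : Type*} (π : TTrace S) (i : ℕ) : TTrace S where
  n := π.n - i
  s := fun j => π.s (i + j)
  t := fun j => π.t (i + j)
  mono := fun j hj => π.mono (i + j) (by omega)

/-- A trace property is a predicate on timed traces. -/
abbrev TraceProp (S : Type*) := TTrace S → Prop

/-- A state predicate regarded as a trace property: it holds on `π` iff it holds in `s 0`. -/
def statePred {S : Type*} (Ψ : S → Prop) : TraceProp S := fun π => Ψ (π.s 0)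

/-- `π ⊨ G_{≤k} Φ` iff `π^i ⊨ Φ` for every index `i` with `t i ≤ t 0 + k`. -/
def Gle {S : Type*} (k : ℝ) (Φ : TraceProp S) : TraceProp S := fun π =>
  ∀ i, i ≤ π.n → π.t i ≤ π.t 0 + k → Φ (π.suffix i)

/-- `π ⊨ F_{≤k} Φ` iff `π^i ⊨ Φ` for some index `i` with `t i ≤ t 0 + k`. -/
def Fle {S : Type*} (k : ℝ) (Φ : TraceProp S) : TraceProp S := fun π =>
  ∃ i, i ≤ π.n ∧ π.t i ≤ π.t 0 + k ∧ Φ (π.suffix i)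

/-- `π ⊨ X_{≤k} Φ` iff `π^m ⊨ Φ` for `m` the largest index with `t m ≤ t 0 + k`. -/
noncomputable def Xle {S : Type*} (k : ℝ) (Φ : TraceProp S) : TraceProp S := fun π =>
  Φ (π.suffix (@Nat.findGreatest (fun i => π.t i ≤ π.t 0 + k) (Classical.decPred _) π.n))

def pImp {S : Type*} (Φ1 Φ2 : TraceProp S) : TraceProp S := fun π => Φ1 π → Φ2 π
def pNot {S : Type*} (Φ : TraceProp S) : TraceProp S := fun π => ¬ Φ π
def pAnd {S : Type*} (Φ1 Φ2 : TraceProp S) : TraceProp S := fun π => Φ1 π ∧ Φ2 π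
def pOr {S : Type*} (Φ1 Φ2 : TraceProp S) : TraceProp S := fun π => Φ1 π ∨ Φ2 π
def pTrue {S : Type*} : TraceProp S := fun _ => True
def pFalse {S : Type*} : TraceProp S := fun _ => False

theorem TTrace.t_lt {S : Type*} (π : TTrace S) (i j : ℕ) (hij : i < j) (hj : j ≤ π.n) :
    π.t i < π.t j := by
  induction j with
  | zero => omega
  | succ k ih =>
    have h1 := π.mono k (by omega)
    rcases Nat.lt_or_ge i k with h | h
    · exact (ih h (by omega)).trans h1
    · have : i = k := by omega
      subst this
      exact h1

/-- translation correctness for 'Ψ1 implies Ψ2 during following [a,b]'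
(absolute interval): assuming some index `p` has `t p = t 0 + a`,
`π ⊨ X_{≤a} G_{≤b−a} (Ψ1 ⟹ Ψ2)` iff for every index `i` with
`t 0 + a ≤ t i ≤ t 0 + b`, `Ψ1 (s i)` implies `Ψ2 (s i)`. -/
theorem pattern_implies_during_following {S : Type*} (π : TTrace S)
    (Ψ1 Ψ2 : S → Prop) (a b : ℝ) (ha : 0 ≤ a) (hab : a ≤ b)
    (hp : ∃ p, p ≤ π.n ∧ π.t p = π.t 0 + a) :
    Xle a (Gle (b - a) (pImp (statePred Ψ1) (statePred Ψ2))) π ↔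
      ∀ i, i ≤ π.n → π.t 0 + a ≤ π.t i → π.t i ≤ π.t 0 + b →
        (Ψ1 (π.s i) → Ψ2 (π.s i)) := by
  obtain ⟨p, hpn, hpt⟩ := hp
  have hm : @Nat.findGreatest (fun i => π.t i ≤ π.t 0 + a) (Classical.decPred _) π.n = p := by
    rw [Nat.findGreatest_eq_iff]
    refine ⟨hpn, fun _ => hpt.le, fun j hj hjn => ?_⟩
    have := π.t_lt p j hj hjn
    simp only [not_le]
    linarith
  unfold Xle
  rw [hm]
  simp only [Gle, pImp, statePred, TTrace.suffix, Nat.add_zero]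
  constructor
  · intro h i hi h1 h2
    have hpi : p ≤ i := by
      by_contra hc
      have := π.t_lt i p (by omega) hpn
      linarith
    obtain ⟨d, rfl⟩ := Nat.exists_eq_add_of_le hpi
    exact h d (by omega) (by linarith)
  · intro h j hj h1
    refine h (p + j) (by omega) ?_ (by linarith)
    rcases Nat.eq_zero_or_pos j with h0 | h0
    · subst h0
      exact hpt.ge
    · have := π.t_lt p (p + j) (by omega) (by omega)
      linarith
end

section
/- Translation correctness for the sliding-interval pattern 'whenever Ψ occurs, Ψ1 implies Ψ2 during following [a,b]': let π be a finite timed trace, Ψ, Ψ1, Ψ2 state predicates on S, and 0 ≤ a ≤ b ≤ k. Assume that for every index i with t_i ≤ t_0 + (k − b) there is an index m with t_m = t_i + a. Then π ⊨ G_{≤k−b}(Ψ ⟹ X_{≤a} G_{≤b−a} (Ψ1 ⟹ Ψ2)) if and only if for every index i with t_i ≤ t_0 + (k − b) at which Ψ(s_i) holds, every index j with t_i + a ≤ t_j ≤ t_i + b satisfies that Ψ1(s_j) implies Ψ2(s_j). -/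
theorem TTrace.lt_of_lt {S : Type*} (π : TTrace S) {i j : ℕ} (hij : i < j) (hj : j ≤ π.n) :
    π.t i < π.t j := by
  induction j with
  | zero => omega
  | succ j ih =>
    have h1 := π.mono j (by omega)
    rcases Nat.lt_succ_iff_lt_or_eq.mp hij with h | h
    · exact (ih h (by omega)).trans h1
    · rw [h]; exact h1

theorem TTrace.le_of_t_le {S : Type*} (π : TTrace S) {i j : ℕ} (hi : i ≤ π.n)
    (h : π.t i ≤ π.t j) : i ≤ j := by
  by_contra hc
  exact absurd (π.lt_of_lt (not_le.mp hc) hi) (not_lt.mpr h)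

theorem Xle_iff {S : Type*} (σ : TTrace S) (a : ℝ) (Φ : TraceProp S) (m : ℕ) (hm : m ≤ σ.n)
    (h : σ.t m = σ.t 0 + a) : Xle a Φ σ ↔ Φ (σ.suffix m) := by
  unfold Xle
  have : @Nat.findGreatest (fun i => σ.t i ≤ σ.t 0 + a) (Classical.decPred _) σ.n = m := by
    rw [Nat.findGreatest_eq_iff]
    refine ⟨hm, fun _ => h.le, fun n hn hn' hc => ?_⟩
    have := σ.lt_of_lt hn hn'
    linarith
  rw [this]

/-- translation correctness for the sliding-interval pattern
'whenever Ψ occurs, Ψ1 implies Ψ2 during following [a,b]':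
`π ⊨ G_{≤k−b}(Ψ ⟹ X_{≤a} G_{≤b−a} (Ψ1 ⟹ Ψ2))` iff for every index `i` with
`t i ≤ t 0 + (k − b)` at which `Ψ (s i)` holds, every index `j` with
`t i + a ≤ t j ≤ t i + b` satisfies `Ψ1 (s j) → Ψ2 (s j)`. -/
theorem pattern_sliding_implies_during {S : Type*} (π : TTrace S)
    (Ψ Ψ1 Ψ2 : S → Prop) (a b k : ℝ) (ha : 0 ≤ a) (hab : a ≤ b) (hbk : b ≤ k)
    (hm : ∀ i, i ≤ π.n → π.t i ≤ π.t 0 + (k - b) →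
            ∃ m, m ≤ π.n ∧ π.t m = π.t i + a) :
    Gle (k - b) (pImp (statePred Ψ)
        (Xle a (Gle (b - a) (pImp (statePred Ψ1) (statePred Ψ2))))) π ↔
      ∀ i, i ≤ π.n → π.t i ≤ π.t 0 + (k - b) → Ψ (π.s i) →
        ∀ j, j ≤ π.n → π.t i + a ≤ π.t j → π.t j ≤ π.t i + b →
          (Ψ1 (π.s j) → Ψ2 (π.s j)) := by
  refine forall_congr' fun i => forall_congr' fun hi => forall_congr' fun hti => ?_
  obtain ⟨m, hmn, hmt⟩ := hm i hi hti
  have him : i ≤ m := π.le_of_t_le hi (by linarith)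
  obtain ⟨d, rfl⟩ := Nat.exists_eq_add_of_le him
  refine forall_congr' fun _ => ?_
  rw [Xle_iff (π.suffix i) a _ d (by simp only [TTrace.suffix]; omega)
    (by simpa [TTrace.suffix] using hmt)]
  simp only [Gle, pImp, statePred, TTrace.suffix, Nat.add_zero]
  constructor
  · intro H j hj h1 h2
    have hdj : i + d ≤ j := π.le_of_t_le hmn (by linarith)
    obtain ⟨e, rfl⟩ := Nat.exists_eq_add_of_le hdj
    have := H e (by omega) (by rw [← Nat.add_assoc]; linarith)
    rwa [← Nat.add_assoc] at this
  · intro H e he h2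
    rw [← Nat.add_assoc] at h2 ⊢
    refine H (i + d + e) (by omega) ?_ (by linarith)
    rcases Nat.eq_zero_or_pos e with h | h
    · subst h; simp [hmt]
    · have := π.lt_of_lt (i := i + d) (j := i + d + e) (by omega) (by omega)
      linarith
end
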